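/- arXiv:0908.4014 — 4 statements merged into one kernel-verified Lean document; each statement's English description precedes it below -/
import Mathlib

section
/- Let L = ℤ[q_i, x_i : i ∈ ℤ] be the polynomial ring over ℤ in two families of indeterminates indexed by ℤ and let K be its fraction field. Suppose t : ℤ × ℕ → K satisfies t_{i,0} = 1 and t_{i,1} = x_i for all i ∈ ℤ, and the recurrence t_{i,n} · t_{i+1,n} = t_{i,n+1} · t_{i+1,n-1} + ∏_{k=1}^{n} q_{i+k} for all i ∈ ℤ and all n ≥ 1. Then for every i ∈ ℤ and n ≥ 1, t_{i,n} equals (the image in K of) the determinant of the n×n tridiagonal matrix whose diagonal entries, from top-left to bottom-right, are x_{i+n-1}, x_{i+n-2}, …, x_i, whose superdiagonal entries are all 1, and whose subdiagonal entries, from top to bottom, are q_{i+n-1}, q_{i+n-2}, …, q_{i+1}. In particular each t_{i,n} is a polynomial in the q_j and x_j. -/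
/-- The `n × n` tridiagonal matrix whose diagonal entries, from top-left to bottom-right,
are `x (i+n-1), x (i+n-2), …, x i`, whose superdiagonal entries are all `1`, and whose
subdiagonal entries, from top to bottom, are `q (i+n-1), …, q (i+1)`. -/
def triMat {R : Type*} [CommRing R] (q x : ℤ → R) (i : ℤ) (n : ℕ) :
    Matrix (Fin n) (Fin n) R :=
  Matrix.of fun j k =>
    if (j : ℕ) = (k : ℕ) then x (i + (n : ℤ) - 1 - (j : ℕ))
    else if (j : ℕ) + 1 = (k : ℕ) then 1
    else if (k : ℕ) + 1 = (j : ℕ) then q (i + (n : ℤ) - 1 - (k : ℕ))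
    else 0

/-- The tridiagonal determinant `D_{i,n}(q,x)`; by convention `D_{i,0}(q,x) = 1`. -/
def triDet {R : Type*} [CommRing R] (q x : ℤ → R) (i : ℤ) (n : ℕ) : R :=
  (triMat q x i n).det

/-- The polynomial ring `L = ℤ[q_i, x_i : i ∈ ℤ]`. -/
abbrev L := MvPolynomial (ℤ ⊕ ℤ) ℤ

/-- The fraction field `K` of `L`. -/
abbrev K := FractionRing L

/-- The indeterminate `q_i`. -/
noncomputable def qvar (i : ℤ) : L := MvPolynomial.X (Sum.inl i)

/-- The indeterminate `x_i`. -/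
noncomputable def xvar (i : ℤ) : L := MvPolynomial.X (Sum.inr i)

theorem triDet_zero {R : Type*} [CommRing R] (q x : ℤ → R) (i : ℤ) : triDet q x i 0 = 1 := by
  simp [triDet]

theorem triDet_one {R : Type*} [CommRing R] (q x : ℤ → R) (i : ℤ) : triDet q x i 1 = x i := by
  simp [triDet, triMat]

theorem triDet_succ_succ {R : Type*} [CommRing R] (q x : ℤ → R) (i : ℤ) (n : ℕ) :
    triDet q x i (n + 2) =
      x (i + n + 1) * triDet q x i (n + 1) - q (i + n + 1) * triDet q x i n := by
  have e1 : (triMat q x i (n + 2)).submatrix Fin.succ Fin.succ = triMat q x i (n + 1) := by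
    ext a b
    have h : i + ((n + 2 : ℕ) : ℤ) - 1 - ((a : ℕ) + 1 : ℕ) = i + ((n + 1 : ℕ) : ℤ) - 1 - (a : ℕ) := by
      push_cast; ring
    have h' : i + ((n + 2 : ℕ) : ℤ) - 1 - ((b : ℕ) + 1 : ℕ) = i + ((n + 1 : ℕ) : ℤ) - 1 - (b : ℕ) := by
      push_cast; ring
    simp only [triMat, Matrix.submatrix_apply, Matrix.of_apply, Fin.val_succ, h, h',
      add_left_inj]
  have e3 : ((triMat q x i (n + 2)).submatrix Fin.succ (Fin.succAbove 1)).submatrix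
      Fin.succ Fin.succ = triMat q x i n := by
    ext a b
    have h : i + ((n + 2 : ℕ) : ℤ) - 1 - ((a : ℕ) + 1 + 1 : ℕ) = i + (n : ℤ) - 1 - (a : ℕ) := by
      push_cast; ring
    have h' : i + ((n + 2 : ℕ) : ℤ) - 1 - ((b : ℕ) + 1 + 1 : ℕ) = i + (n : ℤ) - 1 - (b : ℕ) := by
      push_cast; ring
    have hs : (Fin.succAbove (1 : Fin (n + 2)) b.succ) = b.succ.succ := by
      rw [← Fin.succ_zero_eq_one, Fin.succ_succAbove_succ, Fin.succAbove_zero]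
    simp only [triMat, Matrix.submatrix_apply, Matrix.of_apply, hs, Fin.val_succ, h, h',
      add_left_inj]
  have e2 : ((triMat q x i (n + 2)).submatrix Fin.succ (Fin.succAbove 1)).det =
      q (i + n + 1) * triDet q x i n := by
    rw [Matrix.det_succ_column_zero, Fin.sum_univ_succ, Finset.sum_eq_zero]
    · rw [Fin.succAbove_zero, e3]
      have : i + ((n : ℤ) + 2) - 1 = i + n + 1 := by ring
      simp [triMat, triDet, this]
    · intro j _
      simp [triMat]
  have h0 : triMat q x i (n + 2) 0 0 = x (i + n + 1) := by
    have : i + ((n : ℤ) + 2) - 1 = i + n + 1 := by ring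
    simp [triMat, this]
  have h1 : triMat q x i (n + 2) 0 1 = 1 := by
    simp [triMat]
  have h2 : ∀ j : Fin n, triMat q x i (n + 2) 0 j.succ.succ = 0 := by
    intro j
    simp [triMat]
  rw [triDet, Matrix.det_succ_row_zero, Fin.sum_univ_succ, Fin.sum_univ_succ,
    Finset.sum_eq_zero (fun j _ => by rw [h2]; simp), Fin.succAbove_zero, e1,
    Fin.succ_zero_eq_one, e2, h0, h1]
  simp [triDet]
  ring

theorem triDet_exchange {R : Type*} [CommRing R] (q x : ℤ → R) (i : ℤ) (n : ℕ) :
    triDet q x i (n + 1) * triDet q x (i + 1) (n + 1) =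
      triDet q x i (n + 2) * triDet q x (i + 1) n +
        ∏ k ∈ Finset.Icc 1 (n + 1), q (i + (k : ℕ)) := by
  induction n with
  | zero =>
    rw [triDet_succ_succ]
    simp [triDet_zero, triDet_one]
    ring
  | succ n ih =>
    rw [Finset.prod_Icc_succ_top (by omega), triDet_succ_succ q x i (n + 1),
      triDet_succ_succ q x (i + 1) n]
    have h : i + 1 + (n : ℤ) + 1 = i + ((n + 1 : ℕ) : ℤ) + 1 := by push_cast; ring
    have h' : i + ((n + 1 + 1 : ℕ) : ℤ) = i + ((n + 1 : ℕ) : ℤ) + 1 := by push_cast; ring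
    rw [h, h']
    linear_combination q (i + ((n + 1 : ℕ) : ℤ) + 1) * ih

theorem triDet_var_ne_zero (i : ℤ) (n : ℕ) : triDet qvar xvar i n ≠ 0 := by
  let f : L →+* ℤ := MvPolynomial.eval (Sum.elim (fun _ => 0) (fun _ => 1))
  have hq : ∀ j, f (qvar j) = 0 := fun j => by simp [f, qvar]
  have hx : ∀ j, f (xvar j) = 1 := fun j => by simp [f, xvar]
  have key : ∀ n, f (triDet qvar xvar i n) = 1 ∧ f (triDet qvar xvar i (n + 1)) = 1 := by
    intro n
    induction n with
    | zero => exact ⟨by rw [triDet_zero, map_one], by rw [triDet_one, hx]⟩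
    | succ n ih =>
      refine ⟨ih.2, ?_⟩
      rw [triDet_succ_succ, map_sub, map_mul, map_mul, hq, hx, ih.2]
      simp
  intro h
  have := (key n).1
  rw [h, map_zero] at this
  exact zero_ne_one this

/-- Theorem 1: if `t : ℤ × ℕ → K` satisfies `t_{i,0} = 1`, `t_{i,1} = x_i` and the
recurrence `t_{i,n} t_{i+1,n} = t_{i,n+1} t_{i+1,n-1} + ∏_{k=1}^n q_{i+k}` for `n ≥ 1`,
then `t_{i,n}` is the tridiagonal determinant `D_{i,n}(q,x)`; in particular it is a
polynomial in the `q_j` and `x_j`. -/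
theorem quantized_chebyshev_det (t : ℤ × ℕ → K)
    (h0 : ∀ i : ℤ, t (i, 0) = 1)
    (h1 : ∀ i : ℤ, t (i, 1) = algebraMap L K (xvar i))
    (hrec : ∀ (i : ℤ) (n : ℕ), 1 ≤ n →
      t (i, n) * t (i + 1, n) =
        t (i, n + 1) * t (i + 1, n - 1) +
          algebraMap L K (∏ k ∈ Finset.Icc 1 n, qvar (i + (k : ℕ)))) :
    ∀ (i : ℤ) (n : ℕ), 1 ≤ n →
      t (i, n) = algebraMap L K (triDet qvar xvar i n) := by
  have key : ∀ n : ℕ, (∀ i, t (i, n) = algebraMap L K (triDet qvar xvar i n)) ∧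
      (∀ i, t (i, n + 1) = algebraMap L K (triDet qvar xvar i (n + 1))) := by
    intro n
    induction n with
    | zero =>
      exact ⟨fun i => by rw [h0, triDet_zero, map_one], fun i => by rw [h1, triDet_one]⟩
    | succ n ih =>
      refine ⟨ih.2, fun i => ?_⟩
      have hr := hrec i (n + 1) (by omega)
      rw [ih.2, ih.2, Nat.add_sub_cancel, ih.1, ← map_mul, triDet_exchange, map_add,
        map_mul] at hr
      have hne : algebraMap L K (triDet qvar xvar (i + 1) n) ≠ 0 := by
        rw [Ne, FaithfulSMul.algebraMap_eq_zero_iff]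
        exact triDet_var_ne_zero _ _
      exact (mul_right_cancel₀ hne (add_right_cancel hr)).symm
  exact fun i n _ => (key n).1 i
end

section
/- Fix an integer r ≥ 1 and let K_r = ℚ(x_0, …, x_{r-1}, y_0, …, y_{r-1}) be the field of rational functions in 2r indeterminates over ℚ; adopt the convention x_j = 1 for j < 0 or j ≥ r. For 0 ≤ i ≤ r−1 and 0 ≤ n ≤ r−i define X_{i,n} = Σ_{k=0}^{n} (∏_{j=i}^{i+k-1} y_j) · x_{i-1} x_{i+n} / (x_{i+k-1} x_{i+k}) ∈ K_r (empty products equal 1). Then for every 0 ≤ i ≤ r−2 and 1 ≤ n ≤ r−1−i, the multiplication identity X_{i,n} · X_{i+1,n} = X_{i,n+1} · X_{i+1,n-1} + ∏_{j=i+1}^{i+n} y_j holds in K_r. -/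
/-- The field `K_r = ℚ(x_0, …, x_{r-1}, y_0, …, y_{r-1})` of rational functions in `2r`
indeterminates over `ℚ`. -/
abbrev Kr (r : ℕ) := FractionRing (MvPolynomial (Fin r ⊕ Fin r) ℚ)

/-- The element `x_j` of `K_r`, with the convention `x_j = 1` for `j < 0` or `j ≥ r`. -/
noncomputable def xcl (r : ℕ) (j : ℤ) : Kr r :=
  if h : 0 ≤ j ∧ j < (r : ℤ) then
    algebraMap (MvPolynomial (Fin r ⊕ Fin r) ℚ) (Kr r)
      (MvPolynomial.X (Sum.inl ⟨j.toNat, by omega⟩))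
  else 1

/-- The element `y_j` of `K_r` (by convention `1` out of range, which is never used). -/
noncomputable def ycl (r : ℕ) (j : ℤ) : Kr r :=
  if h : 0 ≤ j ∧ j < (r : ℤ) then
    algebraMap (MvPolynomial (Fin r ⊕ Fin r) ℚ) (Kr r)
      (MvPolynomial.X (Sum.inr ⟨j.toNat, by omega⟩))
  else 1

/-- The Laurent expansion `X_{i,n} = Σ_{k=0}^{n} (∏_{j=i}^{i+k-1} y_j) ·
x_{i-1} x_{i+n} / (x_{i+k-1} x_{i+k})` of the cluster character with principal
coefficients of the indecomposable module `S_i^{(n)}`. -/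
noncomputable def Xcl (r : ℕ) (i : ℤ) (n : ℕ) : Kr r :=
  ∑ k ∈ Finset.range (n + 1),
    (∏ j ∈ Finset.range k, ycl r (i + (j : ℕ))) *
      xcl r (i - 1) * xcl r (i + (n : ℕ)) /
        (xcl r (i + (k : ℕ) - 1) * xcl r (i + (k : ℕ)))

theorem xcl_ne_zero (r : ℕ) (j : ℤ) : xcl r j ≠ 0 := by
  unfold xcl
  split_ifs with h
  · intro h0
    rw [map_eq_zero_iff _ (IsFractionRing.injective _ _)] at h0
    exact MvPolynomial.X_ne_zero _ h0
  · exact one_ne_zero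

/-- Partial sums of the terms of `X_{i,n}` without the common factor. -/
noncomputable def Bcl (r : ℕ) (i : ℤ) (n : ℕ) : Kr r :=
  ∑ k ∈ Finset.range n, (∏ j ∈ Finset.range k, ycl r (i + (j : ℕ))) /
    (xcl r (i + (k : ℕ) - 1) * xcl r (i + (k : ℕ)))

theorem Xcl_eq (r : ℕ) (i : ℤ) (n : ℕ) :
    Xcl r i n = xcl r (i - 1) * xcl r (i + (n : ℕ)) * Bcl r i (n + 1) := by
  unfold Xcl Bcl
  rw [Finset.mul_sum]
  refine Finset.sum_congr rfl fun k _ => ?_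
  ring

theorem Bcl_shift (r : ℕ) (i : ℤ) (n : ℕ) :
    Bcl r i (n + 1) = 1 / (xcl r (i - 1) * xcl r i) + ycl r i * Bcl r (i + 1) n := by
  unfold Bcl
  rw [Finset.sum_range_succ', Finset.mul_sum, add_comm]
  congr 1
  · simp
  · refine Finset.sum_congr rfl fun k _ => ?_
    rw [Finset.prod_range_succ']
    have h1 : i + ((k + 1 : ℕ) : ℤ) = i + 1 + k := by push_cast; ring
    have h2 : ∀ j : ℕ, i + ((j + 1 : ℕ) : ℤ) = i + 1 + j := by intro j; push_cast; ring
    simp only [h2, Nat.cast_zero, add_zero]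
    ring

theorem cluster_character_typeA_mult (r : ℕ) (hr : 1 ≤ r) (i : ℤ) (n : ℕ)
    (hi0 : 0 ≤ i) (hir : i ≤ (r : ℤ) - 2) (hn : 1 ≤ n)
    (hnr : (n : ℤ) ≤ (r : ℤ) - 1 - i) :
    Xcl r i n * Xcl r (i + 1) n =
      Xcl r i (n + 1) * Xcl r (i + 1) (n - 1) +
        ∏ j ∈ Finset.Icc 1 n, ycl r (i + (j : ℕ)) := by
  obtain ⟨m, rfl⟩ : ∃ m, n = m + 1 := ⟨n - 1, by omega⟩
  have hP : ∏ j ∈ Finset.Icc 1 (m + 1), ycl r (i + (j : ℕ)) =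
      ∏ j ∈ Finset.range (m + 1), ycl r (i + 1 + (j : ℕ)) := by
    rw [← Finset.Ico_add_one_right_eq_Icc, Finset.prod_Ico_eq_prod_range]
    refine Finset.prod_congr rfl fun j _ => ?_
    congr 1
    push_cast
    ring
  have hB : Bcl r (i + 1) (m + 1 + 1) = Bcl r (i + 1) (m + 1) +
      (∏ j ∈ Finset.range (m + 1), ycl r (i + 1 + (j : ℕ))) /
        (xcl r (i + 1 + m) * xcl r (i + 1 + m + 1)) := by
    have e1 : i + 1 + ((m + 1 : ℕ) : ℤ) - 1 = i + 1 + m := by push_cast; ring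
    have e2 : i + 1 + ((m + 1 : ℕ) : ℤ) = i + 1 + m + 1 := by push_cast; ring
    conv_lhs => unfold Bcl
    rw [Finset.sum_range_succ, e1, e2]
    rfl
  have e1 : i + ((m + 1 : ℕ) : ℤ) = i + 1 + m := by push_cast; ring
  have e2 : i + 1 + ((m + 1 : ℕ) : ℤ) = i + 1 + m + 1 := by push_cast; ring
  have e3 : i + ((m + 1 + 1 : ℕ) : ℤ) = i + 1 + m + 1 := by push_cast; ring
  have e4 : i + 1 - 1 = i := by ring
  rw [hP, Nat.add_sub_cancel, Xcl_eq, Xcl_eq, Xcl_eq, Xcl_eq, Bcl_shift r i, Bcl_shift r i, hB,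
    e1, e2, e3, e4]
  generalize (∏ j ∈ Finset.range (m + 1), ycl r (i + 1 + (j : ℕ))) = Q
  generalize Bcl r (i + 1) (m + 1) = B
  generalize ycl r i = y
  have h1 := xcl_ne_zero r (i - 1)
  have h2 := xcl_ne_zero r i
  have h3 := xcl_ne_zero r (i + 1 + m)
  have h4 := xcl_ne_zero r (i + 1 + m + 1)
  generalize xcl r (i - 1) = a at *
  generalize xcl r i = b at *
  generalize xcl r (i + 1 + m) = c at *
  generalize xcl r (i + 1 + m + 1) = d at *
  field_simp
  ring
end

section
/- Fix an even integer r ≥ 2 and let K_r = ℚ(x_0, …, x_{r-1}, y_0, …, y_{r-1}) be the field of rational functions in 2r indeterminates over ℚ; adopt the convention x_j = 1 for j < 0 or j ≥ r. For 0 ≤ i ≤ r−1 set X_{i,1} = (x_{i+1} + y_i x_{i-1})/x_i ∈ K_r. Then the family {X_{0,1}, X_{1,1}, …, X_{r-1,1}} is algebraically independent over the subfield ℚ(y_0, …, y_{r-1}) of K_r. -/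
/-- The cluster character `X_{i,1} = (x_{i+1} + y_i x_{i-1}) / x_i` of the simple
module `S_i`. -/
noncomputable def X1 (r : ℕ) (i : ℤ) : Kr r :=
  (xcl r (i + 1) + ycl r i * xcl r (i - 1)) / xcl r i

/-- specialization `x ↦ 1`, `y ↦ 0`. -/
noncomputable def spec (r : ℕ) : MvPolynomial (Fin r ⊕ Fin r) ℚ →+* ℚ :=
  MvPolynomial.eval (Sum.elim (fun _ => 1) (fun _ => 0))

/-- `z` is regular at the specialization point, with value `c`. -/
def Res (r : ℕ) (z : Kr r) (c : ℚ) : Prop :=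
  ∃ n d : MvPolynomial (Fin r ⊕ Fin r) ℚ, spec r d = 1 ∧ spec r n = c ∧
    z * algebraMap _ (Kr r) d = algebraMap _ (Kr r) n

theorem Res.mul {r : ℕ} {z w : Kr r} {c e : ℚ} (hz : Res r z c) (hw : Res r w e) :
    Res r (z * w) (c * e) := by
  obtain ⟨n, d, h1, h2, h3⟩ := hz
  obtain ⟨n', d', h1', h2', h3'⟩ := hw
  refine ⟨n * n', d * d', by simp [h1, h1'], by simp [h2, h2'], ?_⟩
  rw [map_mul, map_mul, ← h3, ← h3']; ring

theorem Res.sub {r : ℕ} {z w : Kr r} {c e : ℚ} (hz : Res r z c) (hw : Res r w e) :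
    Res r (z - w) (c - e) := by
  obtain ⟨n, d, h1, h2, h3⟩ := hz
  obtain ⟨n', d', h1', h2', h3'⟩ := hw
  refine ⟨n * d' - n' * d, d * d', by simp [h1, h1'], by simp [h1, h1', h2, h2'], ?_⟩
  rw [map_mul, map_sub, map_mul, map_mul, ← h3, ← h3']; ring

theorem Res.ne_zero {r : ℕ} {z : Kr r} (hz : Res r z 1) : z ≠ 0 := by
  rintro rfl
  obtain ⟨n, d, h1, h2, h3⟩ := hz
  rw [zero_mul, eq_comm, FaithfulSMul.algebraMap_eq_zero_iff] at h3
  simp [h3] at h2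

theorem xcl_poly (r : ℕ) (j : ℤ) : ∃ p, spec r p = 1 ∧ xcl r j = algebraMap _ (Kr r) p := by
  unfold xcl
  split_ifs with h
  · exact ⟨_, by simp [spec], rfl⟩
  · exact ⟨1, by simp, by simp⟩

theorem ycl_poly (r : ℕ) (j : ℤ) (h : 0 ≤ j ∧ j < (r : ℤ)) :
    ∃ p, spec r p = 0 ∧ ycl r j = algebraMap _ (Kr r) p := by
  unfold ycl
  rw [dif_pos h]
  exact ⟨_, by simp [spec], rfl⟩

theorem res_y (r : ℕ) (j : ℤ) (h : 0 ≤ j ∧ j < (r : ℤ)) : Res r (ycl r j) 0 := by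
  obtain ⟨p, h1, h2⟩ := ycl_poly r j h
  exact ⟨p, 1, by simp, h1, by simp [h2]⟩

theorem X1_mul (r : ℕ) (j : ℤ) :
    X1 r j * xcl r j = xcl r (j + 1) + ycl r j * xcl r (j - 1) :=
  div_mul_cancel₀ _ (xcl_ne_zero r j)

theorem res_X1 (r : ℕ) (j : ℤ) (h : 0 ≤ j ∧ j < (r : ℤ)) : Res r (X1 r j) 1 := by
  obtain ⟨p, h1, h2⟩ := ycl_poly r j h
  obtain ⟨a, a1, a2⟩ := xcl_poly r j
  obtain ⟨b, b1, b2⟩ := xcl_poly r (j + 1)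
  obtain ⟨c, c1, c2⟩ := xcl_poly r (j - 1)
  refine ⟨b + p * c, a, a1, by simp [h1, b1], ?_⟩
  rw [← a2, X1_mul, h2, b2, c2]; simp

theorem linear_form (r : ℕ) (M : IntermediateField ℚ (Kr r))
    (hX : ∀ i : Fin r, X1 r (i : ℤ) ∈ M) (hy : ∀ i : Fin r, ycl r (i : ℤ) ∈ M)
    (n : ℕ) (hn : n ≤ r) :
    ∃ P ∈ M, ∃ Q ∈ M, ∃ P' ∈ M, ∃ Q' ∈ M, ∃ c, Res r P 1 ∧ Res r P' c ∧
      xcl r n = P * xcl r 0 - Q ∧ xcl r ((n : ℤ) - 1) = P' * xcl r 0 - Q' := by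
  induction n with
  | zero =>
    refine ⟨1, one_mem _, 0, zero_mem _, 0, zero_mem _, -1, neg_mem (one_mem _), 0,
      ⟨1, 1, by simp, by simp, by simp⟩, ⟨0, 1, by simp, by simp, by simp⟩, by simp, ?_⟩
    simp [xcl]
  | succ n ih =>
    obtain ⟨P, hP, Q, hQ, P', hP', Q', hQ', c, h1, h2, h3, h4⟩ := ih (by omega)
    have hXn : X1 r (n : ℤ) ∈ M := hX ⟨n, by omega⟩
    have hyn : ycl r (n : ℤ) ∈ M := hy ⟨n, by omega⟩
    have hb : (0 : ℤ) ≤ n ∧ (n : ℤ) < r := by omega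
    refine ⟨X1 r n * P - ycl r n * P', sub_mem (mul_mem hXn hP) (mul_mem hyn hP'),
      X1 r n * Q - ycl r n * Q', sub_mem (mul_mem hXn hQ) (mul_mem hyn hQ'),
      P, hP, Q, hQ, 1, ?_, h1, ?_, ?_⟩
    · have := ((res_X1 r n hb).mul h1).sub ((res_y r n hb).mul h2)
      simpa using this
    · have := X1_mul r n
      rw [h3, h4] at this
      push_cast
      linear_combination -this
    · push_cast
      rw [add_sub_cancel_right, h3]

theorem adjoin_top (r : ℕ) (M : IntermediateField ℚ (Kr r))
    (hX : ∀ i : Fin r, X1 r (i : ℤ) ∈ M) (hy : ∀ i : Fin r, ycl r (i : ℤ) ∈ M) :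
    M = ⊤ := by
  have hx0 : xcl r 0 ∈ M := by
    obtain ⟨P, hP, Q, hQ, -, -, -, -, -, h1, -, h3, -⟩ := linear_form r M hX hy r le_rfl
    have hr : xcl r (r : ℤ) = 1 := by simp [xcl]
    have : xcl r 0 = (1 + Q) / P := by
      rw [eq_div_iff h1.ne_zero, ← hr, h3]; ring
    rw [this]
    exact div_mem (add_mem (one_mem _) hQ) hP
  have hx : ∀ i : Fin r, xcl r (i : ℤ) ∈ M := fun i => by
    obtain ⟨P, hP, Q, hQ, -, -, -, -, -, -, -, h3, -⟩ := linear_form r M hX hy i i.2.le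
    rw [h3]
    exact sub_mem (mul_mem hP hx0) hQ
  have hpoly : ∀ p : MvPolynomial (Fin r ⊕ Fin r) ℚ, algebraMap _ (Kr r) p ∈ M := by
    intro p
    induction p using MvPolynomial.induction_on with
    | C a =>
      have := M.algebraMap_mem a
      rwa [IsScalarTower.algebraMap_apply ℚ (MvPolynomial (Fin r ⊕ Fin r) ℚ) (Kr r)] at this
    | add p q hp hq => rw [map_add]; exact add_mem hp hq
    | mul_X p i hp =>
      rw [map_mul]
      refine mul_mem hp ?_
      rcases i with i | i
      · have := hx i
        simpa [xcl] using this
      · have := hy i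
        simpa [ycl] using this
  rw [eq_top_iff]
  intro z _
  obtain ⟨a, b, -, rfl⟩ := IsFractionRing.div_surjective (A := MvPolynomial (Fin r ⊕ Fin r) ℚ) z
  exact div_mem (hpoly a) (hpoly b)

/-- Lemma 3.3: for `r` even, the family `{X_{0,1}, …, X_{r-1,1}}` is algebraically
independent over the subfield `ℚ(y_0, …, y_{r-1})` of `K_r`. -/
theorem cluster_character_typeA_algebraicIndependent (r : ℕ) (hr : 2 ≤ r)
    (hre : Even r) :
    AlgebraicIndependent
      (IntermediateField.adjoin ℚ (Set.range fun j : Fin r => ycl r (j : ℤ)))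
      (fun i : Fin r => X1 r (i : ℤ)) := by
  set z : Fin r ⊕ Fin r → Kr r :=
    Sum.elim (fun i : Fin r => X1 r (i : ℤ)) (fun j : Fin r => ycl r (j : ℤ)) with hz
  have htop : IntermediateField.adjoin ℚ (Set.range z) = ⊤ := by
    apply adjoin_top
    · exact fun i => IntermediateField.subset_adjoin _ _ ⟨Sum.inl i, rfl⟩
    · exact fun i => IntermediateField.subset_adjoin _ _ ⟨Sum.inr i, rfl⟩
  have halg : Algebra.IsAlgebraic (Algebra.adjoin ℚ (Set.range z)) (Kr r) := by
    rw [← IntermediateField.isAlgebraic_adjoin_iff_top, htop]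
    exact ⟨fun x => isAlgebraic_algebraMap (⟨x, trivial⟩ : (⊤ : IntermediateField ℚ (Kr r)))⟩
  have hfr : Algebra.IsAlgebraic (MvPolynomial (Fin r ⊕ Fin r) ℚ) (Kr r) :=
    IsLocalization.isAlgebraic _ (nonZeroDivisors (MvPolynomial (Fin r ⊕ Fin r) ℚ))
  have hb : IsTranscendenceBasis ℚ
      (algebraMap (MvPolynomial (Fin r ⊕ Fin r) ℚ) (Kr r) ∘ MvPolynomial.X) :=
    (IsTranscendenceBasis.mvPolynomial (Fin r ⊕ Fin r) ℚ).algebraMap_comp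
  have hbz : IsTranscendenceBasis ℚ z :=
    Algebra.IsAlgebraic.isTranscendenceBasis_of_le_trdeg_of_finite ℚ z
      hb.cardinalMk_eq_trdeg.le
  rw [IntermediateField.algebraicIndependent_adjoin_iff]
  exact (AlgebraicIndependent.sumElim_iff.mp hbz.1).2
end

section
/- Let R be a commutative ring and q ∈ R. Define polynomials F^q_n, S^q_n ∈ R[X] by F^q_0 = 1, F^q_1 = X, F^q_2 = X² − 2q, F^q_{n+1} = X · F^q_n − q · F^q_{n-1} for n ≥ 2, and S^q_0 = 1, S^q_1 = X, S^q_{n+1} = X · S^q_n − q · S^q_{n-1} for n ≥ 1. Then for every n ≥ 0, S^q_n = Σ_{k=0}^{⌊n/2⌋} q^k · F^q_{n−2k} in R[X]. -/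
/-- Corollary 6.2: the quantized Chebyshev polynomials of the first and second kinds
satisfy `S_n = Σ_{k=0}^{⌊n/2⌋} q^k · F_{n−2k}`. -/
theorem quantized_chebyshev_second_eq_sum_first {R : Type*} [CommRing R] (q : R)
    (F S : ℕ → Polynomial R)
    (hF0 : F 0 = 1) (hF1 : F 1 = Polynomial.X)
    (hF2 : F 2 = Polynomial.X ^ 2 - Polynomial.C (2 * q))
    (hFrec : ∀ n : ℕ, 2 ≤ n →
      F (n + 1) = Polynomial.X * F n - Polynomial.C q * F (n - 1))
    (hS0 : S 0 = 1) (hS1 : S 1 = Polynomial.X)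
    (hSrec : ∀ n : ℕ, 1 ≤ n →
      S (n + 1) = Polynomial.X * S n - Polynomial.C q * S (n - 1)) :
    ∀ n : ℕ, S n = ∑ k ∈ Finset.range (n / 2 + 1), Polynomial.C (q ^ k) * F (n - 2 * k) := by
  have key : ∀ n : ℕ, F (n + 2) = S (n + 2) - Polynomial.C q * S n ∧
      F (n + 3) = S (n + 3) - Polynomial.C q * S (n + 1) := by
    intro n
    induction n with
    | zero =>
      have h2 := hSrec 1 (by norm_num)
      have h3 := hSrec 2 (by norm_num)
      have f3 := hFrec 2 (by norm_num)
      norm_num at h2 h3 f3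
      constructor
      · simp only [Nat.zero_add]
        rw [hF2, h2, hS0, hS1, two_mul, Polynomial.C_add]; ring
      · simp only [Nat.zero_add]
        rw [f3, h3, hF2, h2, hS0, hS1, hF1, two_mul, Polynomial.C_add]; ring
    | succ m ih =>
      obtain ⟨a, b⟩ := ih
      refine ⟨b, ?_⟩
      have f : F (m + 4) = Polynomial.X * F (m + 3) - Polynomial.C q * F (m + 2) :=
        hFrec (m + 3) (by omega)
      have s4 : S (m + 4) = Polynomial.X * S (m + 3) - Polynomial.C q * S (m + 2) :=
        hSrec (m + 3) (by omega)
      have s2 : S (m + 2) = Polynomial.X * S (m + 1) - Polynomial.C q * S m :=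
        hSrec (m + 1) (by omega)
      change F (m + 4) = S (m + 4) - Polynomial.C q * S (m + 2)
      rw [f, a, b, s4]
      linear_combination Polynomial.C q * s2
  intro n
  induction n using Nat.twoStepInduction with
  | zero => simp [hF0, hS0]
  | one => simp [hF1, hS1]
  | more n ih _ =>
    have e : (n + 2) / 2 + 1 = (n / 2 + 1) + 1 := by omega
    rw [e, Finset.sum_range_succ']
    have h : ∀ k, Polynomial.C (q ^ (k + 1)) * F (n + 2 - 2 * (k + 1)) =
        Polynomial.C q * (Polynomial.C (q ^ k) * F (n - 2 * k)) := by
      intro k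
      have : n + 2 - 2 * (k + 1) = n - 2 * k := by omega
      rw [this, pow_succ, Polynomial.C_mul]; ring
    simp only [h]
    rw [← Finset.mul_sum, ← ih]
    have := (key n).1
    simp [this]
end
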